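/- arXiv:2105.02487 — 4 statements merged into one kernel-verified Lean document; each statement's English description precedes it below -/
import Mathlib

section
/- Suppose λ > max_{1≤k≤p−1} (1/n)·‖Σ_{i=1}^n a^{X_k}_i (a^Y_i)ᵀ‖_F. Then every global minimizer (B̂_1,…,B̂_{p−1}) of the group-lasso objective F satisfies B̂_k = 0 for every k ∈ {1,…,p−1}; that is, the estimated support set {k : ‖B̂_k‖_F > 0} is empty. -/
open Matrix Finset

/-- The Frobenius norm of a real matrix: `‖A‖_F = sqrt (trace (Aᵀ * A))`. -/
noncomputable def frobNorm {m n : ℕ} (A : Matrix (Fin m) (Fin n) ℝ) : ℝ :=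
  Real.sqrt (Matrix.trace (Aᵀ * A))

lemma frobNorm_eq_sum {m n : ℕ} (A : Matrix (Fin m) (Fin n) ℝ) :
    frobNorm A = Real.sqrt (∑ x : Fin m × Fin n, A x.1 x.2 ^ 2) := by
  unfold frobNorm
  congr 1
  rw [Fintype.sum_prod_type, Finset.sum_comm]
  simp [Matrix.trace, Matrix.mul_apply, sq]

lemma frobNorm_nonneg {m n : ℕ} (A : Matrix (Fin m) (Fin n) ℝ) : 0 ≤ frobNorm A :=
  Real.sqrt_nonneg _

lemma frobNorm_transpose {m n : ℕ} (A : Matrix (Fin m) (Fin n) ℝ) :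
    frobNorm Aᵀ = frobNorm A := by
  rw [frobNorm_eq_sum, frobNorm_eq_sum]
  congr 1
  rw [Fintype.sum_prod_type, Fintype.sum_prod_type, Finset.sum_comm]
  simp

lemma frobNorm_eq_zero {m n : ℕ} {A : Matrix (Fin m) (Fin n) ℝ} (h : frobNorm A = 0) :
    A = 0 := by
  rw [frobNorm_eq_sum, Real.sqrt_eq_zero (Finset.sum_nonneg fun _ _ => sq_nonneg _),
    Finset.sum_eq_zero_iff_of_nonneg (fun _ _ => sq_nonneg _)] at h
  ext i j
  simpa using h (i, j) (Finset.mem_univ _)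

lemma frob_cauchy {m n : ℕ} (A : Matrix (Fin m) (Fin n) ℝ) (G : Matrix (Fin n) (Fin m) ℝ) :
    ∑ a, ∑ b, A a b * G b a ≤ frobNorm A * frobNorm G := by
  rw [← frobNorm_transpose G, frobNorm_eq_sum, frobNorm_eq_sum, ← Fintype.sum_prod_type']
  exact Real.sum_mul_le_sqrt_mul_sqrt _ _ _

lemma cross_eq {n M q : ℕ} (aY : Fin n → Fin M → ℝ) (aX : Fin q → Fin n → Fin M → ℝ)
    (B : Fin q → Matrix (Fin M) (Fin M) ℝ) :
    ∑ i, ∑ j, aY i j * ∑ k, (B k).mulVec (aX k i) j =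
      ∑ k, ∑ a, ∑ b, B k a b * (∑ i, Matrix.vecMulVec (aX k i) (aY i)) b a := by
  simp only [Matrix.sum_apply, Matrix.vecMulVec_apply, Matrix.mulVec, dotProduct,
    Finset.mul_sum]
  rw [Finset.sum_congr rfl fun i _ => Finset.sum_comm, Finset.sum_comm]
  refine Finset.sum_congr rfl fun k _ => ?_
  rw [Finset.sum_comm]
  refine Finset.sum_congr rfl fun a _ => ?_
  rw [Finset.sum_comm]
  refine Finset.sum_congr rfl fun b _ => Finset.sum_congr rfl fun i _ => ?_
  ring

/-- If `λ > max_k (1/n)·‖Σ_i a^{X_k}_i (a^Y_i)ᵀ‖_F`, then every global minimizer of the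
group-lasso objective is identically zero, i.e. the estimated support set is empty. -/
theorem groupLasso_zero_of_large_lambda
    (n M p : ℕ) (hn : 1 ≤ n) (hM : 1 ≤ M) (hp : 2 ≤ p)
    (lam : ℝ) (hlam0 : 0 < lam)
    (aY : Fin n → Fin M → ℝ) (aX : Fin (p - 1) → Fin n → Fin M → ℝ)
    (F : (Fin (p - 1) → Matrix (Fin M) (Fin M) ℝ) → ℝ)
    (hF : ∀ B, F B =
      (1 / (2 * n) : ℝ) * ∑ i, ∑ j, (aY i j - ∑ k, (B k).mulVec (aX k i) j) ^ 2
        + lam * ∑ k, frobNorm (B k))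
    (hlam : ∀ k : Fin (p - 1),
      (1 / n : ℝ) * frobNorm (∑ i, Matrix.vecMulVec (aX k i) (aY i)) < lam)
    (Bhat : Fin (p - 1) → Matrix (Fin M) (Fin M) ℝ)
    (hmin : ∀ B, F Bhat ≤ F B) :
    ∀ k, Bhat k = 0 := by
  have h0 := hmin 0
  rw [hF, hF] at h0
  have hz : frobNorm (0 : Matrix (Fin M) (Fin M) ℝ) = 0 := by simp [frobNorm]
  simp only [Pi.zero_apply, Matrix.zero_mulVec, Finset.sum_const_zero, sub_zero, hz,
    mul_zero, add_zero] at h0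
  have hnpos : (0 : ℝ) < n := by exact_mod_cast hn
  set G : Fin (p - 1) → Matrix (Fin M) (Fin M) ℝ :=
    fun k => ∑ i, Matrix.vecMulVec (aX k i) (aY i) with hG
  have hexp : ∑ i, ∑ j, aY i j ^ 2 - 2 * (∑ i, ∑ j, aY i j * ∑ k, (Bhat k).mulVec (aX k i) j)
      ≤ ∑ i, ∑ j, (aY i j - ∑ k, (Bhat k).mulVec (aX k i) j) ^ 2 := by
    simp only [Finset.mul_sum (s := (Finset.univ : Finset (Fin n))),
      Finset.mul_sum (s := (Finset.univ : Finset (Fin M))) (a := (2 : ℝ)),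
      ← Finset.sum_sub_distrib]
    refine Finset.sum_le_sum fun i _ => Finset.sum_le_sum fun j _ => ?_
    nlinarith [sq_nonneg (∑ k, (Bhat k).mulVec (aX k i) j)]
  have hcross : ∑ i, ∑ j, aY i j * ∑ k, (Bhat k).mulVec (aX k i) j
      ≤ ∑ k, frobNorm (Bhat k) * frobNorm (G k) := by
    rw [cross_eq]
    exact Finset.sum_le_sum fun k _ => frob_cauchy _ _
  have hc : (0 : ℝ) < 1 / (2 * n) := by positivity
  have h1 := mul_le_mul_of_nonneg_left
    (show ∑ i, ∑ j, aY i j ^ 2 - 2 * (∑ k, frobNorm (Bhat k) * frobNorm (G k))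
      ≤ ∑ i, ∑ j, (aY i j - ∑ k, (Bhat k).mulVec (aX k i) j) ^ 2 by linarith) hc.le
  have h2 : (1 / (2 * n) : ℝ) * (2 * ∑ k, frobNorm (Bhat k) * frobNorm (G k))
      = ∑ k, frobNorm (Bhat k) * ((1 / n : ℝ) * frobNorm (G k)) := by
    rw [Finset.mul_sum, Finset.mul_sum]
    refine Finset.sum_congr rfl fun k _ => ?_
    field_simp
  have h3 : ∑ k, frobNorm (Bhat k) * (lam - (1 / n : ℝ) * frobNorm (G k)) ≤ 0 := by
    simp only [mul_sub, Finset.sum_sub_distrib, ← Finset.sum_mul]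
    rw [mul_sub] at h1
    linarith
  have hnn : ∀ k ∈ (Finset.univ : Finset (Fin (p - 1))),
      0 ≤ frobNorm (Bhat k) * (lam - (1 / n : ℝ) * frobNorm (G k)) := fun k _ =>
    mul_nonneg (frobNorm_nonneg _) (sub_nonneg.2 (hlam k).le)
  intro k
  have h4 := (Finset.sum_eq_zero_iff_of_nonneg hnn).1
    (le_antisymm h3 (Finset.sum_nonneg hnn)) k (Finset.mem_univ k)
  rcases mul_eq_zero.1 h4 with h | h
  · exact frobNorm_eq_zero h
  · exact absurd h (sub_pos.2 (hlam k)).ne'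
end

section
/- If (B̂_1,…,B̂_{p−1}) is a global minimizer of the group-lasso objective F and k ∈ {1,…,p−1} is such that B̂_k ≠ 0, then λ · B̂_k / ‖B̂_k‖_F = (1/n) Σ_{i=1}^n (a^Y_i − Σ_{l=1}^{p−1} B̂_l a^{X_l}_i)(a^{X_k}_i)ᵀ. -/
open Matrix Finset

theorem frob_trace_eq {M : ℕ} (A : Matrix (Fin M) (Fin M) ℝ) :
    Matrix.trace (Aᵀ * A) = ∑ i, ∑ j, A i j ^ 2 := by
  simp only [Matrix.trace, Matrix.diag_apply, Matrix.mul_apply, Matrix.transpose_apply]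
  rw [Finset.sum_comm]
  simp only [sq]

theorem frob_trace_perturb {M : ℕ} (A : Matrix (Fin M) (Fin M) ℝ) (r s : Fin M) (t : ℝ) :
    Matrix.trace ((A + t • Matrix.single r s (1 : ℝ))ᵀ * (A + t • Matrix.single r s (1 : ℝ)))
      = Matrix.trace (Aᵀ * A) + 2 * t * A r s + t ^ 2 := by
  rw [frob_trace_eq, frob_trace_eq]
  have h : ∀ i j, (A + t • Matrix.single r s (1 : ℝ)) i j ^ 2 =
      A i j ^ 2 + (if r = i then (if s = j then 2 * t * A i j + t ^ 2 else 0) else 0) := by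
    intro i j
    by_cases h1 : r = i <;> by_cases h2 : s = j <;> simp [Matrix.single, h1, h2]
    ring
  simp only [h, Finset.sum_add_distrib]
  have h' : ∑ i, ∑ j, (if r = i then (if s = j then 2 * t * A i j + t ^ 2 else 0) else 0)
      = 2 * t * A r s + t ^ 2 := by
    rw [Finset.sum_eq_single r (by intro b _ hb; simp [hb.symm]) (by simp)]
    simp
  rw [h']; ring

theorem frob_trace_pos {M : ℕ} (A : Matrix (Fin M) (Fin M) ℝ) (hA : A ≠ 0) :
    0 < Matrix.trace (Aᵀ * A) := by
  rw [frob_trace_eq]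
  have h0 : 0 ≤ ∑ i, ∑ j, A i j ^ 2 :=
    Finset.sum_nonneg fun i _ => Finset.sum_nonneg fun j _ => sq_nonneg _
  refine lt_of_le_of_ne h0 fun h => hA ?_
  ext i j
  have h1 := (Finset.sum_eq_zero_iff_of_nonneg
    (fun i _ => Finset.sum_nonneg fun j _ => sq_nonneg (A i j))).1 h.symm i (Finset.mem_univ _)
  have h2 := (Finset.sum_eq_zero_iff_of_nonneg
    (fun j _ => sq_nonneg (A i j))).1 h1 j (Finset.mem_univ _)
  simpa using h2

/-- First-order (KKT) condition at a nonzero block of a global minimizer of the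
group-lasso objective:
`λ · B̂_k / ‖B̂_k‖_F = (1/n) Σ_i (a^Y_i − Σ_l B̂_l a^{X_l}_i)(a^{X_k}_i)ᵀ`. -/
theorem groupLasso_KKT_of_nonzero_block
    (n M p : ℕ) (hn : 1 ≤ n) (hM : 1 ≤ M) (hp : 2 ≤ p)
    (lam : ℝ) (hlam0 : 0 < lam)
    (aY : Fin n → Fin M → ℝ) (aX : Fin (p - 1) → Fin n → Fin M → ℝ)
    (F : (Fin (p - 1) → Matrix (Fin M) (Fin M) ℝ) → ℝ)
    (hF : ∀ B, F B =
      (1 / (2 * n) : ℝ) * ∑ i, ∑ j, (aY i j - ∑ k, (B k).mulVec (aX k i) j) ^ 2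
        + lam * ∑ k, frobNorm (B k))
    (Bhat : Fin (p - 1) → Matrix (Fin M) (Fin M) ℝ)
    (hmin : ∀ B, F Bhat ≤ F B) :
    ∀ k : Fin (p - 1), Bhat k ≠ 0 →
      (lam / frobNorm (Bhat k)) • Bhat k =
        (1 / n : ℝ) •
          ∑ i, Matrix.vecMulVec (aY i - ∑ l, (Bhat l).mulVec (aX l i)) (aX k i) := by
  intro k hk
  ext r s
  have hQ := frob_trace_pos _ hk
  set Q := Matrix.trace ((Bhat k)ᵀ * Bhat k) with hQdef
  have hn0 : (n : ℝ) ≠ 0 := by positivity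
  let R : Fin n → Fin M → ℝ := fun i j => aY i j - ∑ l, (Bhat l).mulVec (aX l i) j
  let c : Fin n → Fin M → ℝ := fun i j => if r = j then aX k i s else 0
  let g : ℝ → ℝ := fun t => (1 / (2 * n) : ℝ) * ∑ i, ∑ j, (R i j - t * c i j) ^ 2
    + lam * (Real.sqrt (Q + 2 * t * Bhat k r s + t ^ 2)
      + ∑ l ∈ Finset.univ.erase k, frobNorm (Bhat l))
  have hg : ∀ t, F (fun l => if l = k then Bhat l + t • Matrix.single r s (1 : ℝ) else Bhat l)
      = g t := by
    intro t
    rw [hF]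
    simp only [g]
    congr 2
    · refine Finset.sum_congr rfl fun i _ => Finset.sum_congr rfl fun j _ => ?_
      congr 1
      have : ∀ l, ((if l = k then Bhat l + t • Matrix.single r s (1 : ℝ) else Bhat l).mulVec
          (aX l i)) j = (Bhat l).mulVec (aX l i) j + (if l = k then t * c i j else 0) := by
        intro l
        by_cases hl : l = k
        · subst hl
          by_cases hj : r = j
          · subst hj
            simp [Matrix.add_mulVec, Matrix.smul_mulVec, c, Matrix.single_mulVec]
          · simp [Matrix.add_mulVec, Matrix.smul_mulVec, c, hj, Ne.symm hj,
              Matrix.single_mulVec]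
        · simp [hl]
      simp only [this, Finset.sum_add_distrib, R]
      simp
      ring
    · rw [← Finset.add_sum_erase _ _ (Finset.mem_univ k)]
      congr 1
      · simp only [if_true, frobNorm, frob_trace_perturb, hQdef]
      · refine Finset.sum_congr rfl fun l hl => ?_
        rw [if_neg (Finset.ne_of_mem_erase hl)]
  have hg0 : g 0 = F Bhat := by
    rw [← hg 0]
    congr 1
    ext l : 1
    simp
  have hloc : IsLocalMin g 0 := by
    refine Filter.Eventually.of_forall fun t => ?_
    rw [hg0, ← hg t]
    exact hmin _
  have hd : HasDerivAt g ((1 / (2 * n) : ℝ) * ∑ i, ∑ j, (-2 * R i j * c i j)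
      + lam * (2 * Bhat k r s / (2 * Real.sqrt Q))) 0 := by
    refine HasDerivAt.add (HasDerivAt.const_mul _ ?_) (HasDerivAt.const_mul _ ?_)
    · refine HasDerivAt.fun_sum fun i _ => HasDerivAt.fun_sum fun j _ => ?_
      have h := ((((hasDerivAt_id (0 : ℝ)).mul_const (c i j)).const_sub (R i j)).pow 2)
      refine HasDerivAt.congr_deriv h ?_
      simp
    · refine HasDerivAt.add_const _ ?_
      have h : HasDerivAt (fun t : ℝ => Q + 2 * t * Bhat k r s + t ^ 2) (2 * Bhat k r s) 0 := by
        have h := ((((hasDerivAt_id (0 : ℝ)).const_mul 2).mul_const (Bhat k r s)).const_add Q).add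
          ((hasDerivAt_id (0 : ℝ)).pow 2)
        refine HasDerivAt.congr_deriv h ?_
        simp
      have h2 := h.sqrt (by simpa using hQ.ne')
      simpa using h2
  have h0 := hloc.hasDerivAt_eq_zero hd
  have hc : ∀ i, ∑ j, (-2 * R i j * c i j) = -2 * (R i r * aX k i s) := by
    intro i
    simp [c]
    try ring
  simp only [hc, ← Finset.mul_sum] at h0
  have hrhs : ((1 / n : ℝ) • ∑ i, Matrix.vecMulVec
      (aY i - ∑ l, (Bhat l).mulVec (aX l i)) (aX k i)) r s
      = (1 / n : ℝ) * ∑ i, R i r * aX k i s := by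
    simp [Matrix.sum_apply, Matrix.vecMulVec_apply, R]
  rw [hrhs]
  have hs : Real.sqrt Q ≠ 0 := (Real.sqrt_pos.2 hQ).ne'
  have hfr : frobNorm (Bhat k) = Real.sqrt Q := rfl
  rw [hfr, Matrix.smul_apply, smul_eq_mul]
  generalize ∑ i, R i r * aX k i s = T at h0 ⊢
  field_simp at h0 ⊢
  linarith
end

section
/- Let μ be a centered Gaussian measure on a separable real Hilbert space H and set σ₀ = ∫_H ‖x‖² dμ(x), assumed finite. Then for every integer k ≥ 1, ∫_H ‖x‖^{2k} dμ(x) ≤ (2σ₀)^k · k!. -/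
open MeasureTheory ProbabilityTheory

open scoped Nat in
lemma aux_dfact (k : ℕ) : (2 * k - 1 : ℕ)‼ ≤ 2 ^ k * k ! := by
  induction k with
  | zero => simp
  | succ k ih =>
    rcases k with _ | k
    · simp
    · have e : 2 * (k + 1 + 1) - 1 = (2 * (k + 1) - 1) + 2 := by omega
      rw [e, Nat.doubleFactorial_add_two, pow_succ, Nat.factorial_succ (k + 1)]
      calc (2 * (k + 1) - 1 + 2) * (2 * (k + 1) - 1 : ℕ)‼
          ≤ (2 * (k + 1 + 1)) * (2 ^ (k + 1) * (k + 1)!) := Nat.mul_le_mul (by omega) ih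
        _ = _ := by ring

open scoped Nat in
lemma aux_gauss_integral (v : NNReal) (hv : v ≠ 0) (k : ℕ) :
    ∫ x, x ^ (2 * k) ∂(gaussianReal 0 v) = (2 * k - 1 : ℕ)‼ * (v : ℝ) ^ k := by
  have hv' : (0 : ℝ) < v := by positivity
  have h2v : (0 : ℝ) < 2 * v := by positivity
  rw [integral_gaussianReal_eq_integral_smul hv]
  have h1 : ∀ x : ℝ, gaussianPDFReal 0 v x • x ^ (2 * k) =
      (fun y : ℝ => (√(2 * Real.pi * v))⁻¹ *
        (y ^ (2 * k : ℝ) * Real.exp (-(2 * v : ℝ)⁻¹ * y ^ (2 : ℝ)))) |x| := by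
    intro x
    have e1 : |x| ^ (2 * k : ℝ) = x ^ (2 * k) := by
      have : (2 * k : ℝ) = ((2 * k : ℕ) : ℝ) := by push_cast; ring
      rw [this, Real.rpow_natCast, pow_mul, sq_abs, ← pow_mul]
    have e2 : |x| ^ (2 : ℝ) = x ^ 2 := by
      rw [Real.rpow_two, sq_abs]
    simp only [e1, e2, gaussianPDFReal, smul_eq_mul, sub_zero]
    rw [show -x ^ 2 / (2 * (v : ℝ)) = -(2 * v : ℝ)⁻¹ * x ^ 2 by field_simp]
    ring
  simp_rw [h1]
  rw [integral_comp_abs (f := fun y : ℝ => (√(2 * Real.pi * v))⁻¹ *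
        (y ^ (2 * k : ℝ) * Real.exp (-(2 * v : ℝ)⁻¹ * y ^ (2 : ℝ)))),
    integral_const_mul, integral_rpow_mul_exp_neg_mul_rpow (by norm_num)
      (by have : (0 : ℝ) ≤ k := by positivity
          linarith) (by positivity)]
  rw [show ((2 * k + 1 : ℝ) / 2) = k + 1 / 2 by ring, Real.Gamma_nat_add_half,
    show (-(2 * k + 1 : ℝ) / 2) = -(k + 1 / 2) by ring, Real.rpow_neg (by positivity),
    Real.inv_rpow h2v.le, inv_inv, Real.rpow_add h2v, Real.rpow_natCast, ← Real.sqrt_eq_rpow,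
    show 2 * Real.pi * (v : ℝ) = Real.pi * (2 * v) by ring, Real.sqrt_mul Real.pi_pos.le, mul_pow]
  have : √(2 * (v : ℝ)) ≠ 0 := by positivity
  have : √Real.pi ≠ 0 := by positivity
  field_simp

open scoped Nat in
lemma aux_gauss_lintegral (v : NNReal) (k : ℕ) (hk : 1 ≤ k) :
    ∫⁻ x, (‖x‖ₑ ^ 2) ^ k ∂(gaussianReal 0 v) = ((2 * k - 1 : ℕ)‼ : ENNReal) * (v : ENNReal) ^ k := by
  by_cases hv : v = 0
  · subst hv
    have : k ≠ 0 := by omega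
    simp [this]
  have h0 : ∀ x : ℝ, (‖x‖ₑ ^ 2) ^ k = ENNReal.ofReal (x ^ (2 * k)) := by
    intro x
    rw [← pow_mul, Real.enorm_eq_ofReal_abs, ← ENNReal.ofReal_pow (abs_nonneg x), pow_mul, sq_abs,
      ← pow_mul]
  simp_rw [h0]
  rw [← ofReal_integral_eq_lintegral_ofReal, aux_gauss_integral v hv]
  · rw [ENNReal.ofReal_mul (by positivity), ENNReal.ofReal_natCast,
      ENNReal.ofReal_pow (by positivity), ENNReal.ofReal_coe_nnreal]
  · have := (memLp_id_gaussianReal (μ := 0) (v := v) ((2 * k : ℕ) : NNReal)).integrable_norm_pow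
      (p := 2 * k) (by omega)
    refine this.congr (ae_of_all _ fun x => ?_)
    simp only [id, Real.norm_eq_abs]
    rw [pow_mul, sq_abs, ← pow_mul]
  · refine ae_of_all _ fun x => ?_
    simp only [Pi.zero_apply, pow_mul]
    positivity

lemma aux_minkowski {Ω ι : Type*} [MeasurableSpace Ω] [Countable ι] (μ : Measure Ω)
    (f : ι → Ω → ENNReal) (hf : ∀ i, Measurable (f i)) (k : ℕ) (hk : 1 ≤ k) (C : ENNReal)
    (h : ∀ i, ∫⁻ x, f i x ^ k ∂μ ≤ C * (∫⁻ x, f i x ∂μ) ^ k) :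
    ∫⁻ x, (∑' i, f i x) ^ k ∂μ ≤ C * (∫⁻ x, ∑' i, f i x ∂μ) ^ k := by
  have hk0 : (k : ℝ) ≠ 0 := by positivity
  have hk1 : (1 : ℝ) ≤ k := by exact_mod_cast hk
  simp_rw [ENNReal.tsum_eq_iSup_sum, ENNReal.iSup_pow]
  rw [lintegral_iSup_directed]
  rotate_left
  · intro s
    exact ((Finset.measurable_fun_sum s fun i _ => hf i).pow_const k).aemeasurable
  · refine Monotone.directed_le fun s t hst x => ?_
    dsimp only
    gcongr
  refine iSup_le fun s => ?_
  have hmink := eLpNorm'_sum_le (μ := μ) (f := f) (s := s) (q := (k : ℝ))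
    (fun i _ => (hf i).aestronglyMeasurable) hk1
  have key : (∫⁻ x, (∑ i ∈ s, f i x) ^ k ∂μ) ^ (1 / (k : ℝ)) ≤
      C ^ (1 / (k : ℝ)) * ∫⁻ x, ∑ i ∈ s, f i x ∂μ := by
    rw [lintegral_finsetSum _ fun i _ => hf i, Finset.mul_sum]
    simp only [eLpNorm', enorm_eq_self, ENNReal.rpow_natCast, Finset.sum_apply] at hmink
    refine hmink.trans (Finset.sum_le_sum fun i _ => ?_)
    calc (∫⁻ x, f i x ^ k ∂μ) ^ (1 / (k : ℝ))
        ≤ (C * (∫⁻ x, f i x ∂μ) ^ k) ^ (1 / (k : ℝ)) := by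
          gcongr
          exact h i
      _ = _ := by
          rw [ENNReal.mul_rpow_of_nonneg _ _ (by positivity), ← ENNReal.rpow_natCast (_) k,
            ← ENNReal.rpow_mul, mul_one_div_cancel hk0, ENNReal.rpow_one]
  have key2 := ENNReal.rpow_le_rpow key (z := (k : ℝ)) (by positivity)
  rw [ENNReal.mul_rpow_of_nonneg _ _ (by positivity), ← ENNReal.rpow_mul, ← ENNReal.rpow_mul,
    one_div_mul_cancel hk0, ENNReal.rpow_one, ENNReal.rpow_one, ENNReal.rpow_natCast] at key2
  refine key2.trans ?_
  gcongr
  exact le_iSup (fun s : Finset _ => ∑ i ∈ s, f i _) s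

lemma aux_countable {H ι : Type*} [NormedAddCommGroup H] [InnerProductSpace ℝ H]
    [TopologicalSpace.SeparableSpace H] (b : ι → H) (hb : Orthonormal ℝ b) : Countable ι := by
  refine Pairwise.countable_of_isOpen_disjoint (s := fun i => Metric.ball (b i) (1 / 2)) ?_
    (fun i => Metric.isOpen_ball) (fun i => ⟨b i, by simp⟩)
  intro i j hij
  refine Metric.ball_disjoint_ball ?_
  have : ‖b i - b j‖ ^ 2 = 2 := by
    rw [norm_sub_sq_real, hb.1 i, hb.1 j, hb.2 hij]; norm_num
  rw [dist_eq_norm]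
  nlinarith [norm_nonneg (b i - b j)]

lemma aux_parseval {H ι : Type*} [NormedAddCommGroup H] [InnerProductSpace ℝ H]
    (b : HilbertBasis ι ℝ H) (x : H) : ‖x‖ₑ ^ 2 = ∑' i, ‖innerSL ℝ (b i) x‖ₑ ^ 2 := by
  have h := b.hasSum_inner_mul_inner x x
  rw [real_inner_self_eq_norm_sq] at h
  have h2 : HasSum (fun i => ‖innerSL ℝ (b i) x‖ ^ 2) (‖x‖ ^ 2) := by
    refine h.congr_fun ?_ <;>
    · intro i
      rw [innerSL_apply_apply, real_inner_comm x (b i), Real.norm_eq_abs, sq_abs, sq]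
  have e : ∀ i, ‖innerSL ℝ (b i) x‖ₑ ^ 2 = ENNReal.ofReal (‖innerSL ℝ (b i) x‖ ^ 2) := fun i => by
    rw [ENNReal.ofReal_pow (norm_nonneg _), ofReal_norm]
  simp_rw [e]
  rw [← ENNReal.ofReal_tsum_of_nonneg (fun i => by positivity) h2.summable, h2.tsum_eq,
    ENNReal.ofReal_pow (norm_nonneg _), ofReal_norm]

/-- Moment bound for a centered Gaussian measure on a separable real Hilbert space:
if `σ₀ = ∫ ‖x‖² dμ` is finite, then `∫ ‖x‖^{2k} dμ ≤ (2σ₀)^k · k!` for every `k ≥ 1`.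
A measure is Gaussian if every continuous linear functional pushes it forward to a
(possibly degenerate) Gaussian measure on `ℝ`; it is centered if its mean is `0`. -/
theorem gaussian_measure_norm_moment_bound
    {H : Type*} [NormedAddCommGroup H] [InnerProductSpace ℝ H] [CompleteSpace H]
    [TopologicalSpace.SeparableSpace H] [MeasurableSpace H] [BorelSpace H]
    (μ : Measure H) [IsProbabilityMeasure μ]
    (hgauss : ∀ L : H →L[ℝ] ℝ, ∃ (m : ℝ) (v : NNReal),
      Measure.map L μ = gaussianReal m v)
    (hcentered : ∫ x, x ∂μ = 0)
    (σ₀ : ℝ) (hσ₀ : 0 ≤ σ₀)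
    (hσ : ∫⁻ x, (‖x‖₊ : ENNReal) ^ 2 ∂μ = ENNReal.ofReal σ₀) :
    ∀ k : ℕ, 1 ≤ k →
      ∫⁻ x, (‖x‖₊ : ENNReal) ^ (2 * k) ∂μ ≤
        ENNReal.ofReal ((2 * σ₀) ^ k * (Nat.factorial k)) := by
  intro k hk
  have hG : IsGaussian μ := isGaussian_of_map_eq_gaussianReal hgauss
  obtain ⟨w, b, -⟩ := exists_hilbertBasis ℝ H
  have hc : Countable w := aux_countable b b.orthonormal
  have hm : ∀ i, Measurable fun x : H => ‖innerSL ℝ (b i) x‖ₑ ^ 2 := fun i =>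
    ((innerSL ℝ (b i)).continuous.measurable.enorm).pow_const 2
  have hcoord : ∀ i, ∃ v : NNReal, ∀ n : ℕ, 1 ≤ n →
      ∫⁻ x, (‖innerSL ℝ (b i) x‖ₑ ^ 2) ^ n ∂μ =
        ((Nat.doubleFactorial (2 * n - 1) : ℕ) : ENNReal) * (v : ENNReal) ^ n := by
    intro i
    obtain ⟨m, v, hv⟩ := hgauss (innerSL ℝ (b i))
    have hm0 : m = 0 := by
      have h1 : ∫ x, x ∂(Measure.map (innerSL ℝ (b i)) μ) = m := by
        rw [hv, integral_id_gaussianReal]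
      rw [integral_map (by fun_prop) (by fun_prop), IsGaussian.integral_dual, hcentered,
        map_zero] at h1
      exact h1.symm
    subst hm0
    refine ⟨v, fun n hn => ?_⟩
    rw [← aux_gauss_lintegral v n hn, ← hv, lintegral_map (by fun_prop) (by fun_prop)]
  have hmain := aux_minkowski μ (fun i x => ‖innerSL ℝ (b i) x‖ₑ ^ 2) hm k hk
    ((2 ^ k * Nat.factorial k : ℕ) : ENNReal) (by
      intro i
      obtain ⟨v, hv⟩ := hcoord i
      have h1 := hv 1 le_rfl
      simp only [pow_one] at h1
      rw [hv k hk, h1]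
      simp only [mul_one, Nat.add_one_sub_one, Nat.doubleFactorial, Nat.cast_one, one_mul]
      gcongr
      exact aux_dfact k)
  simp_rw [← aux_parseval b] at hmain
  have hσ' : ∫⁻ x, ‖x‖ₑ ^ 2 ∂μ = ENNReal.ofReal σ₀ := hσ
  rw [hσ'] at hmain
  simp_rw [← pow_mul] at hmain
  refine hmain.trans (le_of_eq ?_)
  rw [mul_pow, ENNReal.ofReal_mul (by positivity), ENNReal.ofReal_mul (by positivity),
    ENNReal.ofReal_pow hσ₀, ENNReal.ofReal_pow (by norm_num), ENNReal.ofReal_natCast]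
  push_cast
  simp only [ENNReal.ofReal_ofNat]
  ring
end

section
/- For every m ≥ 1, Σ_{k∈K} Σ_{m'=1}^∞ (b̃_{k,mm'} − b_{k,mm'})² ≤ 2·(Σ_{k∈K} ‖β_k‖_HS²)·Γ_φ(m)² + 2·Σ_{k∈K} Σ_{m'=1}^∞ ( ∫_T∫_T β_k(t,t') φ_m(t) (φ̂_{m'}(t') − φ_{m'}(t')) dt dt' )². -/
open MeasureTheory

/-- `L²(T)` for a set `T ⊆ ℝ`, with the Lebesgue measure restricted to `T`. -/
noncomputable def muT (T : Set ℝ) : Measure ℝ := volume.restrict T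

/-- The product measure on `T × T`, so that `Lp ℝ 2 (piT T)` is `L²(T×T)`. -/
noncomputable def piT (T : Set ℝ) : Measure (ℝ × ℝ) := (volume.restrict T).prod (volume.restrict T)

section Helpers

variable {μ : Measure ℝ} [SFinite μ]

theorem tens_memLp (u v : Lp ℝ 2 μ) :
    MemLp (fun x : ℝ × ℝ => u x.1 * v x.2) 2 (μ.prod μ) := by
  have hm : AEStronglyMeasurable (fun x : ℝ × ℝ => u x.1 * v x.2) (μ.prod μ) :=
    (Lp.aestronglyMeasurable u).comp_fst.mul (Lp.aestronglyMeasurable v).comp_snd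
  rw [memLp_two_iff_integrable_sq hm]
  have := ((Lp.memLp u).integrable_sq).mul_prod ((Lp.memLp v).integrable_sq)
  simpa only [mul_pow] using this

/-- The tensor product of two square-integrable functions. -/
noncomputable def tens (u v : Lp ℝ 2 μ) : Lp ℝ 2 (μ.prod μ) := (tens_memLp u v).toLp _

theorem tens_coe (u v : Lp ℝ 2 μ) :
    tens u v =ᵐ[μ.prod μ] fun x : ℝ × ℝ => u x.1 * v x.2 := (tens_memLp u v).coeFn_toLp

theorem inner_tens (u v u' v' : Lp ℝ 2 μ) :
    inner ℝ (tens u v) (tens u' v') = inner ℝ u u' * inner ℝ v v' := by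
  rw [L2.inner_def, L2.inner_def, L2.inner_def, ← integral_prod_mul]
  apply integral_congr_ae
  filter_upwards [tens_coe u v, tens_coe u' v'] with x h1 h2
  rw [h1, h2]
  simp
  ring

theorem inner_right_tens (β : Lp ℝ 2 (μ.prod μ)) (u v : Lp ℝ 2 μ) :
    inner ℝ (tens u v) β = ∫ x, β x * u x.1 * v x.2 ∂(μ.prod μ) := by
  rw [L2.inner_def]
  apply integral_congr_ae
  filter_upwards [tens_coe u v] with x h1
  rw [h1]
  simp
  ring

theorem integrable_tens (β : Lp ℝ 2 (μ.prod μ)) (u v : Lp ℝ 2 μ) :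
    Integrable (fun x => β x * u x.1 * v x.2) (μ.prod μ) := by
  have := (Lp.memLp β).integrable_mul (tens_memLp u v)
  simpa only [Pi.mul_def, mul_assoc] using this

theorem tens_sub_left (u u' v : Lp ℝ 2 μ) : tens (u - u') v = tens u v - tens u' v := by
  apply Lp.ext
  have h := (Measure.quasiMeasurePreserving_fst (μ := μ) (ν := μ)).ae (Lp.coeFn_sub u u')
  filter_upwards [tens_coe u v, tens_coe u' v, tens_coe (u - u') v,
    Lp.coeFn_sub (tens u v) (tens u' v), h] with x h1 h2 h3 h4 h5
  rw [h3, h4, h5]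
  simp only [Pi.sub_apply, h1, h2]
  ring

theorem tens_bessel (β : Lp ℝ 2 (μ.prod μ)) (u : Lp ℝ 2 μ) (e : ℕ → Lp ℝ 2 μ)
    (he : Orthonormal ℝ e) :
    Summable (fun n => (inner ℝ (tens u (e n)) β) ^ 2) ∧
      ∑' n, (inner ℝ (tens u (e n)) β) ^ 2 ≤ ‖β‖ ^ 2 * ‖u‖ ^ 2 := by
  by_cases hu : u = 0
  · have h0 : ∀ n, tens u (e n) = 0 := by
      intro n
      rw [← inner_self_eq_zero (𝕜 := ℝ), inner_tens, hu]
      simp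
    simp only [h0]
    simp [hu]
  · have hc : ‖u‖ ≠ 0 := norm_ne_zero_iff.mpr hu
    have ho : Orthonormal ℝ (fun n => ‖u‖⁻¹ • tens u (e n)) := by
      rw [orthonormal_iff_ite] at he ⊢
      intro i j
      rw [real_inner_smul_left, real_inner_smul_right, inner_tens, he i j,
        real_inner_self_eq_norm_sq]
      split_ifs
      · field_simp
      · simp
    have key : ∀ n, (inner ℝ (tens u (e n)) β) ^ 2
        = ‖u‖ ^ 2 * ‖inner ℝ (‖u‖⁻¹ • tens u (e n)) β‖ ^ 2 := by
      intro n
      rw [real_inner_smul_left, Real.norm_eq_abs, sq_abs]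
      field_simp
    simp_rw [key]
    refine ⟨(ho.inner_products_summable β).mul_left _, ?_⟩
    rw [tsum_mul_left, mul_comm]
    exact mul_le_mul_of_nonneg_right (ho.tsum_inner_products_le β) (by positivity)

theorem single_bound (β : Lp ℝ 2 (μ.prod μ)) (u u' : Lp ℝ 2 μ) (e e' : ℕ → Lp ℝ 2 μ)
    (he : Orthonormal ℝ e) (he' : Orthonormal ℝ e') (g : ℝ) (hg : ‖u' - u‖ ≤ g) :
    ∑' n, ((∫ x, β x * u' x.1 * e' n x.2 ∂(μ.prod μ)) -
        ∫ x, β x * u x.1 * e n x.2 ∂(μ.prod μ)) ^ 2 ≤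
      2 * ‖β‖ ^ 2 * g ^ 2 +
        2 * ∑' n, (∫ x, β x * u x.1 * (e' n x.2 - e n x.2) ∂(μ.prod μ)) ^ 2 := by
  have h3 : ∀ n, (∫ x, β x * u x.1 * (e' n x.2 - e n x.2) ∂(μ.prod μ))
      = inner ℝ (tens u (e' n)) β - inner ℝ (tens u (e n)) β := by
    intro n
    rw [inner_right_tens, inner_right_tens,
      ← integral_sub (integrable_tens β u (e' n)) (integrable_tens β u (e n))]
    simp only [mul_sub]
  simp_rw [h3, ← inner_right_tens]
  obtain ⟨s1, b1⟩ := tens_bessel β (u' - u) e' he'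
  obtain ⟨s2, -⟩ := tens_bessel β u e' he'
  obtain ⟨s3, -⟩ := tens_bessel β u e he
  have s4 : Summable fun n => (inner ℝ (tens u (e' n)) β - inner ℝ (tens u (e n)) β) ^ 2 := by
    refine Summable.of_nonneg_of_le (fun n => sq_nonneg _) (fun n => ?_)
      ((s2.add s3).mul_left 2)
    nlinarith [sq_nonneg (inner ℝ (tens u (e' n)) β + inner ℝ (tens u (e n)) β)]
  have hle : ∀ n, (inner ℝ (tens u' (e' n)) β - inner ℝ (tens u (e n)) β) ^ 2 ≤
      2 * (inner ℝ (tens (u' - u) (e' n)) β) ^ 2 +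
        2 * (inner ℝ (tens u (e' n)) β - inner ℝ (tens u (e n)) β) ^ 2 := by
    intro n
    rw [tens_sub_left, inner_sub_left]
    nlinarith [sq_nonneg ((inner ℝ (tens u' (e' n)) β - inner ℝ (tens u (e' n)) β) -
      (inner ℝ (tens u (e' n)) β - inner ℝ (tens u (e n)) β))]
  have sR := (s1.mul_left 2).add (s4.mul_left 2)
  have sL := Summable.of_nonneg_of_le (fun n => sq_nonneg _) hle sR
  have h := sL.tsum_le_tsum hle sR
  rw [(s1.mul_left 2).tsum_add (s4.mul_left 2), tsum_mul_left, tsum_mul_left] at h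
  have hg2 : ‖u' - u‖ ^ 2 ≤ g ^ 2 := pow_le_pow_left₀ (norm_nonneg _) hg 2
  have := mul_le_mul_of_nonneg_left hg2 (sq_nonneg ‖β‖)
  linarith

end Helpers

/-- Coefficient perturbation bound for two orthonormal bases `φ`, `φ̂` of `L²(T)` with
`‖φ̂_m − φ_m‖ ≤ Γ_φ(m)`: for every `m`,
`Σ_k Σ_{m'} (b̃_{k,mm'} − b_{k,mm'})² ≤ 2 (Σ_k ‖β_k‖_HS²) Γ_φ(m)²
  + 2 Σ_k Σ_{m'} (∫∫ β_k(t,t') φ_m(t) (φ̂_{m'}(t') − φ_{m'}(t')) dt dt')²`. -/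
theorem coefficient_perturbation_bound
    (T : Set ℝ) (hT : IsCompact T) (hTpos : 0 < volume T)
    {K : Type*} [Fintype K]
    (β : K → Lp ℝ 2 (piT T))
    (φ φhat : HilbertBasis ℕ ℝ (Lp ℝ 2 (muT T)))
    (Γφ : ℕ → ℝ) (hΓφ : ∀ m, ‖φhat m - φ m‖ ≤ Γφ m)
    (hΓsum : Summable fun m => Γφ m ^ 2)
    (b btilde : K → ℕ → ℕ → ℝ)
    (hb : ∀ k m m', b k m m' = ∫ x, β k x * φ m x.1 * φ m' x.2 ∂(piT T))
    (hbt : ∀ k m m', btilde k m m' = ∫ x, β k x * φhat m x.1 * φhat m' x.2 ∂(piT T)) :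
    ∀ m : ℕ,
      (∑ k, ∑' m', (btilde k m m' - b k m m') ^ 2) ≤
        2 * (∑ k, ‖β k‖ ^ 2) * Γφ m ^ 2 +
          2 * ∑ k, ∑' m',
            (∫ x, β k x * φ m x.1 * (φhat m' x.2 - φ m' x.2) ∂(piT T)) ^ 2 := by
  intro m
  simp_rw [hb, hbt]
  rw [Finset.mul_sum, Finset.mul_sum, Finset.sum_mul, ← Finset.sum_add_distrib]
  exact Finset.sum_le_sum fun k _ =>
    single_bound (μ := volume.restrict T) (β k) (φ m) (φhat m) φ φhat φ.orthonormal
      φhat.orthonormal (Γφ m) (hΓφ m)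
end
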